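/- arXiv:1006.2488 — 4 statements merged into one kernel-verified Lean document; each statement's English description precedes it below -/
import Mathlib

section
/- Let $f : I \subset [0,\infty) \to \mathbb{R}$ be twice differentiable on the interior $I^\circ$ of $I$ with $f''$ integrable on $[a,b]$, where $a, b \in I^\circ$ and $a < b$. If $|f''|$ is $s$-convex in the second sense on $[a,b]$ for some fixed $s \in (0,1]$, then for every $x \in [a,b]$: $\left| \frac{1}{b-a}\int_a^b f(u)\,du - f(x) + \left(x - \frac{a+b}{2}\right) f'(x) \right| \le \frac{1}{2(b-a)} \Big\{ \Big[ \frac{|f''(x)|}{s+3} + \frac{2|f''(a)|}{(s+1)(s+2)(s+3)} \Big] (x-a)^3 + \Big[ \frac{|f''(x)|}{s+3} + \frac{2|f''(b)|}{(s+1)(s+2)(s+3)} \Big] (b-x)^3 \Big\}$. -/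
open MeasureTheory Set intervalIntegral

/-! Integrating `(u - c) ^ 2 • f'' u` by parts twice from `c` to `x`, once for `c = a` and once for
`c = b`, expresses the defect of the Ostrowski-type quadrature rule through these two integrals.
After rescaling `[c, x]` to `[0, 1]`, `s`-convexity bounds each of them by a combination of the
Beta integrals `∫ t ^ 2 * t ^ s` and `∫ t ^ 2 * (1 - t) ^ s`. -/

/-- `s`-convexity in the second sense of `g` on `S`, required of `‖f''‖` in `stmt1_general`. Only
the inequality is recorded: `S` need not be convex, and `s` may be any real number. For nonnegative
`g`, `s = 0` gives the `P`-functions and `s < 0` the `(-s)`-Godunova–Levin functions, where the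
convention `0 ^ s = 0` makes the inequality trivial at `t = 0, 1`. -/
def SConvexOn {V : Type*} [AddCommGroup V] [Module ℝ V] (s : ℝ) (S : Set V) (g : V → ℝ) : Prop :=
  ∀ u ∈ S, ∀ v ∈ S, ∀ t ∈ Icc (0 : ℝ) 1, g (t • u + (1 - t) • v) ≤ t ^ s * g u + (1 - t) ^ s * g v

lemma integral_pow_mul_rpow (n : ℕ) {s : ℝ} (hs : -1 < s + n) :
    ∫ t in (0 : ℝ)..1, t ^ n * t ^ s = 1 / (s + n + 1) := by
  have h : ∫ t in (0 : ℝ)..1, t ^ n * t ^ s = ∫ t in (0 : ℝ)..1, t ^ (s + n) := by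
    refine integral_congr_ae (.of_forall fun t ht => ?_)
    rw [uIoc_of_le zero_le_one] at ht
    rw [Real.rpow_add_natCast ht.1.ne', mul_comm]
  rw [h, integral_rpow (Or.inl hs), Real.one_rpow, Real.zero_rpow (by linarith), sub_zero]

lemma integral_pow_mul_one_sub_rpow (n : ℕ) {s : ℝ} (hs : -1 < s) :
    ∫ t in (0 : ℝ)..1, t ^ n * (1 - t) ^ s
      = n.factorial / ∏ j ∈ Finset.range (n + 1), (s + 1 + j) := by
  have hbeta := Complex.betaIntegral_eval_nat_add_one_right (u := (s + 1 : ℝ))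
    (by rw [Complex.ofReal_re]; linarith) n
  rw [← Complex.betaIntegral_symm, Complex.betaIntegral] at hbeta
  apply Complex.ofReal_injective
  rw [← intervalIntegral.integral_ofReal]
  push_cast at hbeta ⊢
  rw [← hbeta]
  refine integral_congr fun t ht => ?_
  rw [uIcc_of_le zero_le_one] at ht
  have hone_sub : (((1 - t) ^ s : ℝ) : ℂ) = (1 - t : ℂ) ^ (s : ℂ) := by
    rw [Complex.ofReal_cpow (sub_nonneg.2 ht.2), Complex.ofReal_sub, Complex.ofReal_one]
  simp only [hone_sub, add_sub_cancel_right, Complex.cpow_natCast]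

lemma intervalIntegrable_one_sub_rpow {s : ℝ} (hs : -1 < s) :
    IntervalIntegrable (fun t : ℝ => (1 - t) ^ s) volume 0 1 := by
  simpa using ((intervalIntegrable_rpow' (a := 0) (b := 1) hs).comp_sub_left 1).symm

section SecondDerivative

variable {E : Type*} [NormedAddCommGroup E] [NormedSpace ℝ E]

lemma integral_sub_pow_smul_eq_rescaled (n : ℕ) (g : ℝ → E) (c x : ℝ) :
    ∫ u in c..x, (u - c) ^ n • g u
      = (x - c) ^ (n + 1) • ∫ t in (0 : ℝ)..1, t ^ n • g (t * x + (1 - t) * c) := by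
  have hsubst := smul_integral_comp_add_mul (a := 0) (b := 1)
    (fun u => (u - c) ^ n • g u) (x - c) c
  have hintegrand (t : ℝ) : (c + (x - c) * t - c) ^ n • g (c + (x - c) * t)
      = (x - c) ^ n • t ^ n • g (t * x + (1 - t) * c) := by
    rw [smul_smul, ← mul_pow, add_sub_cancel_left,
      show c + (x - c) * t = t * x + (1 - t) * c by ring]
  simp only [hintegrand, mul_zero, add_zero, mul_one, add_sub_cancel,
    intervalIntegral.integral_smul] at hsubst
  rw [← hsubst, smul_smul, ← pow_succ']

lemma norm_integral_sub_pow_smul_le (n : ℕ) {g : ℝ → E} {c x s A B : ℝ} (hs : -1 < s)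
    (hg : ∀ t ∈ Icc (0 : ℝ) 1, ‖g (t * x + (1 - t) * c)‖ ≤ t ^ s * A + (1 - t) ^ s * B) :
    ‖∫ u in c..x, (u - c) ^ n • g u‖
      ≤ (A / (s + n + 1) + n.factorial * B / ∏ j ∈ Finset.range (n + 1), (s + 1 + j))
        * |x - c| ^ (n + 1) := by
  have hA : IntervalIntegrable (fun t : ℝ => A * (t ^ n * t ^ s)) volume 0 1 :=
    ((intervalIntegrable_rpow' hs).continuousOn_mul (by fun_prop)).const_mul A
  have hB : IntervalIntegrable (fun t : ℝ => B * (t ^ n * (1 - t) ^ s)) volume 0 1 :=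
    ((intervalIntegrable_one_sub_rpow hs).continuousOn_mul (by fun_prop)).const_mul B
  have hpointwise : ∀ t ∈ Ioc (0 : ℝ) 1, ‖t ^ n • g (t * x + (1 - t) * c)‖
      ≤ A * (t ^ n * t ^ s) + B * (t ^ n * (1 - t) ^ s) := fun t ht => by
    have htn : 0 ≤ t ^ n := pow_nonneg ht.1.le n
    rw [norm_smul, Real.norm_of_nonneg htn]
    linarith [mul_le_mul_of_nonneg_left (hg t (Ioc_subset_Icc_self ht)) htn]
  have hunit : ‖∫ t in (0 : ℝ)..1, t ^ n • g (t * x + (1 - t) * c)‖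
      ≤ A / (s + n + 1) + n.factorial * B / ∏ j ∈ Finset.range (n + 1), (s + 1 + j) := by
    refine (norm_integral_le_of_norm_le zero_le_one (.of_forall hpointwise) (hA.add hB)).trans_eq ?_
    have hsn : -1 < s + n := by linarith [n.cast_nonneg (α := ℝ)]
    rw [intervalIntegral.integral_add hA hB, intervalIntegral.integral_const_mul,
      intervalIntegral.integral_const_mul, integral_pow_mul_rpow n hsn,
      integral_pow_mul_one_sub_rpow n hs]
    ring
  rw [integral_sub_pow_smul_eq_rescaled, norm_smul, norm_pow, Real.norm_eq_abs, mul_comm]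
  gcongr

lemma norm_integral_sub_sq_smul_le {g : ℝ → E} {c x s A B : ℝ} (hs : -1 < s)
    (hg : ∀ t ∈ Icc (0 : ℝ) 1, ‖g (t * x + (1 - t) * c)‖ ≤ t ^ s * A + (1 - t) ^ s * B) :
    ‖∫ u in c..x, (u - c) ^ 2 • g u‖
      ≤ (A / (s + 3) + 2 * B / ((s + 1) * (s + 2) * (s + 3))) * |x - c| ^ 3 := by
  refine (norm_integral_sub_pow_smul_le 2 hs hg).trans_eq ?_
  simp only [Finset.prod_range_succ, Finset.prod_range_zero, Nat.factorial]
  push_cast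
  ring_nf

variable [CompleteSpace E] {f f' f'' : ℝ → E} {a b c x s : ℝ}

lemma integral_sub_sq_smul_deriv_deriv
    (hf : ∀ y ∈ uIcc c x, HasDerivWithinAt f (f' y) (uIcc c x) y)
    (hf' : ∀ y ∈ uIcc c x, HasDerivWithinAt f' (f'' y) (uIcc c x) y)
    (hint : IntervalIntegrable f'' volume c x) :
    ∫ u in c..x, (u - c) ^ 2 • f'' u
      = (x - c) ^ 2 • f' x - (2 * (x - c)) • f x + (2 : ℝ) • ∫ u in c..x, f u := by
  have hf'int : IntervalIntegrable f' volume c x :=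
    ContinuousOn.intervalIntegrable fun y hy => (hf' y hy).continuousWithinAt
  have hsub (y : ℝ) : HasDerivAt (fun u : ℝ => 2 * (u - c)) 2 y := by
    simpa using ((hasDerivAt_id y).sub_const c).const_mul 2
  have hsq (y : ℝ) : HasDerivAt (fun u : ℝ => (u - c) ^ 2) (2 * (y - c)) y := by
    simpa using ((hasDerivAt_id y).sub_const c).fun_pow 2
  rw [integral_smul_deriv_eq_deriv_smul_of_hasDerivWithinAt
      (fun y _ => (hsq y).hasDerivWithinAt) hf' (Continuous.intervalIntegrable (by fun_prop) _ _)
      hint,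
    integral_smul_deriv_eq_deriv_smul_of_hasDerivWithinAt
      (fun y _ => (hsub y).hasDerivWithinAt) hf intervalIntegrable_const hf'int,
    intervalIntegral.integral_smul]
  simp only [sub_self]
  module

lemma average_sub_add_smul_deriv_eq (hab : a < b) (hx : x ∈ Icc a b)
    (hf : ∀ y ∈ Icc a b, HasDerivWithinAt f (f' y) (Icc a b) y)
    (hf' : ∀ y ∈ Icc a b, HasDerivWithinAt f' (f'' y) (Icc a b) y)
    (hint : IntervalIntegrable f'' volume a b) :
    (1 / (b - a)) • (∫ u in a..b, f u) - f x + (x - (a + b) / 2) • f' x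
      = (1 / (2 * (b - a))) •
        ((∫ u in a..x, (u - a) ^ 2 • f'' u) - ∫ u in b..x, (u - b) ^ 2 • f'' u) := by
  have hIcc : uIcc a b = Icc a b := uIcc_of_le hab.le
  have hparts {c : ℝ} (hc : c ∈ Icc a b) : ∫ u in c..x, (u - c) ^ 2 • f'' u
      = (x - c) ^ 2 • f' x - (2 * (x - c)) • f x + (2 : ℝ) • ∫ u in c..x, f u := by
    have hcx : uIcc c x ⊆ Icc a b := ordConnected_Icc.uIcc_subset hc hx
    exact integral_sub_sq_smul_deriv_deriv (fun y hy => (hf y (hcx hy)).mono hcx)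
      (fun y hy => (hf' y (hcx hy)).mono hcx) (hint.mono_set (hIcc ▸ hcx))
  have hfint : IntervalIntegrable f volume a b :=
    ContinuousOn.intervalIntegrable (hIcc ▸ fun y hy => (hf y hy).continuousWithinAt)
  have hsplit : (∫ u in a..b, f u) = (∫ u in a..x, f u) - ∫ u in b..x, f u := by
    have hax : IntervalIntegrable f volume a x :=
      hfint.mono_set (uIcc_subset_uIcc_left (hIcc ▸ hx))
    have hxb : IntervalIntegrable f volume x b :=
      hfint.mono_set (uIcc_subset_uIcc_right (hIcc ▸ hx))
    rw [← integral_add_adjacent_intervals hax hxb, integral_symm b x, sub_eq_add_neg]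
  have hba : b - a ≠ 0 := (sub_pos.2 hab).ne'
  rw [hparts (left_mem_Icc.2 hab.le), hparts (right_mem_Icc.2 hab.le), hsplit]
  match_scalars <;> field_simp <;> ring

theorem stmt1_general (hab : a < b) (hx : x ∈ Icc a b)
    (hf : ∀ y ∈ Icc a b, HasDerivWithinAt f (f' y) (Icc a b) y)
    (hf' : ∀ y ∈ Icc a b, HasDerivWithinAt f' (f'' y) (Icc a b) y)
    (hint : IntervalIntegrable f'' volume a b) (hs : -1 < s)
    (hconv : SConvexOn s (Icc a b) fun y => ‖f'' y‖) :
    ‖(1 / (b - a)) • (∫ u in a..b, f u) - f x + (x - (a + b) / 2) • f' x‖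
      ≤ (1 / (2 * (b - a))) *
        ((‖f'' x‖ / (s + 3) + 2 * ‖f'' a‖ / ((s + 1) * (s + 2) * (s + 3))) * (x - a) ^ 3
          + (‖f'' x‖ / (s + 3) + 2 * ‖f'' b‖ / ((s + 1) * (s + 2) * (s + 3))) * (b - x) ^ 3) := by
  have hleft := norm_integral_sub_sq_smul_le hs (hconv x hx a (left_mem_Icc.2 hab.le))
  have hright := norm_integral_sub_sq_smul_le hs (hconv x hx b (right_mem_Icc.2 hab.le))
  rw [abs_of_nonneg (sub_nonneg.2 hx.1)] at hleft
  rw [abs_sub_comm, abs_of_nonneg (sub_nonneg.2 hx.2)] at hright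
  have hpos : 0 < 1 / (2 * (b - a)) := one_div_pos.2 (by linarith)
  rw [average_sub_add_smul_deriv_eq hab hx hf hf' hint, norm_smul, Real.norm_of_nonneg hpos.le]
  gcongr
  exact (norm_sub_le _ _).trans (add_le_add hleft hright)

end SecondDerivative

theorem stmt1 (I : Set ℝ) (hI : Convex ℝ I) (hI0 : I ⊆ Set.Ici (0:ℝ)) (f f' f'' : ℝ → ℝ) (a b : ℝ)
    (ha : a ∈ interior I) (hb : b ∈ interior I) (hab : a < b)
    (hf' : ∀ y ∈ interior I, HasDerivAt f (f' y) y)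
    (hf'' : ∀ y ∈ interior I, HasDerivAt f' (f'' y) y)
    (hfint : IntervalIntegrable f'' MeasureTheory.volume a b)
    (s : ℝ) (hs : s ∈ Set.Ioc (0:ℝ) 1)
    (hconv : ∀ u ∈ Set.Icc a b, ∀ v ∈ Set.Icc a b, ∀ t ∈ Set.Icc (0:ℝ) 1,
      |f'' (t * u + (1 - t) * v)| ≤ t ^ s * |f'' u| + (1 - t) ^ s * |f'' v|) :
    ∀ x ∈ Set.Icc a b,
      |(1 / (b - a)) * (∫ u in a..b, f u) - f x + (x - (a + b) / 2) * f' x|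
        ≤ (1 / (2 * (b - a))) *
            ((|f'' x| / (s + 3) + 2 * |f'' a| / ((s + 1) * (s + 2) * (s + 3))) * (x - a) ^ 3
              + (|f'' x| / (s + 3) + 2 * |f'' b| / ((s + 1) * (s + 2) * (s + 3))) * (b - x) ^ 3) := by
  have hsub : Icc a b ⊆ interior I := hI.interior.ordConnected.out ha hb
  exact fun x hx => stmt1_general hab hx (fun y hy => (hf' y (hsub hy)).hasDerivWithinAt)
    (fun y hy => (hf'' y (hsub hy)).hasDerivWithinAt) hfint (by linarith [hs.1]) hconv
end

section
/- Let $f : I \subset [0,\infty) \to \mathbb{R}$ be twice differentiable on the interior $I^\circ$ of $I$ with $f''$ integrable on $[a,b]$, where $a, b \in I^\circ$ and $a < b$. Let $p, q > 1$ with $\frac{1}{p} + \frac{1}{q} = 1$, suppose $|f''|^q$ is $s$-convex in the second sense on $[a,b]$ for some fixed $s \in (0,1]$, and suppose $M > 0$ satisfies $|f''(u)| \le M$ for all $u \in [a,b]$. Then for every $x \in [a,b]$: $\left| \frac{1}{b-a}\int_a^b f(u)\,du - f(x) + \left(x - \frac{a+b}{2}\right) f'(x) \right| \le \frac{3M}{(2p+1)^{1/p}}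 \left(\frac{2}{s+1}\right)^{1/q} \Big[ \frac{(b-a)^2}{24} + \frac{1}{2}\left(x - \frac{a+b}{2}\right)^2 \Big]$. -/
open MeasureTheory Set intervalIntegral

/-!
If `f'` is Lipschitz with constant `M`, then `f` differs from its first-order Taylor polynomial at
`x` by at most `M / 2 * (u - x) ^ 2`. Averaging this over `[a, b]` gives
`M * ((b - a) ^ 2 / 24 + (x - (a + b) / 2) ^ 2 / 2)`, because `(u - x) ^ 2` has average
`(b - a) ^ 2 / 12 + (x - (a + b) / 2) ^ 2`. The remaining factor of the bound is at least `1`: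
Bernoulli's inequality gives `2 * p + 1 ≤ 3 ^ p`, and `2 / (s + 1) ≥ 1`.
-/

section TaylorRemainder

variable {E F : Type*} [NormedAddCommGroup E] [NormedSpace ℝ E]
  [NormedAddCommGroup F] [NormedSpace ℝ F] {S : Set E} {x u : E} {M : ℝ}

theorem norm_sub_sub_fderiv_le_of_norm_fderiv_sub_le {f : E → F} {f' : E → E →L[ℝ] F}
    (hS : StarConvex ℝ x S) (hf : ∀ y ∈ S, HasFDerivWithinAt f (f' y) S y)
    (hf' : ∀ y ∈ S, ‖f' y - f' x‖ ≤ M * ‖y - x‖) (hu : u ∈ S) :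
    ‖f u - f x - f' x (u - x)‖ ≤ M / 2 * ‖u - x‖ ^ 2 := by
  let γ : ℝ → E := AffineMap.lineMap x u
  let g : ℝ → F := fun t ↦ f (γ t) - f x - t • f' x (u - x)
  let g' : ℝ → F := fun t ↦ f' (γ t) (u - x) - f' x (u - x)
  have γ_mem : MapsTo γ (Icc 0 1) S := fun t ht ↦
    starConvex_iff_segment_subset.1 hS hu (segment_eq_image_lineMap ℝ x u ▸ mem_image_of_mem _ ht)
  have norm_γ_sub {t : ℝ} (ht : 0 ≤ t) : ‖γ t - x‖ = t * ‖u - x‖ := by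
    rw [← dist_eq_norm, dist_lineMap_left, Real.norm_of_nonneg ht, dist_comm, dist_eq_norm]
  have hg (t : ℝ) (ht : t ∈ Icc (0 : ℝ) 1) : HasDerivWithinAt g (g' t) (Icc 0 1) t := by
    have hfγ : HasDerivWithinAt (f ∘ γ) (f' (γ t) (u - x)) (Icc 0 1) t :=
      (hf _ (γ_mem ht)).comp_hasDerivWithinAt t AffineMap.hasDerivWithinAt_lineMap γ_mem
    have hlin : HasDerivWithinAt (fun t : ℝ ↦ t • f' x (u - x)) (f' x (u - x)) (Icc 0 1) t := by
      simpa only [id, one_smul] using (hasDerivWithinAt_id t _).smul_const (f' x (u - x))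
    exact (hfγ.sub_const (f x)).sub hlin
  have hB (t : ℝ) : HasDerivAt (fun t ↦ M / 2 * ‖u - x‖ ^ 2 * t ^ 2) (M * t * ‖u - x‖ ^ 2) t := by
    refine ((hasDerivAt_pow 2 t).const_mul (M / 2 * ‖u - x‖ ^ 2)).congr_deriv ?_
    push_cast
    ring
  have hg' (t : ℝ) (ht : t ∈ Ico (0 : ℝ) 1) : ‖g' t‖ ≤ M * t * ‖u - x‖ ^ 2 := calc
    ‖g' t‖ ≤ ‖f' (γ t) - f' x‖ * ‖u - x‖ := (f' (γ t) - f' x).le_opNorm (u - x)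
    _ ≤ M * ‖γ t - x‖ * ‖u - x‖ := by gcongr; exact hf' _ (γ_mem (Ico_subset_Icc_self ht))
    _ = M * t * ‖u - x‖ ^ 2 := by rw [norm_γ_sub ht.1]; ring
  have norm_g_le := image_norm_le_of_norm_deriv_right_le_deriv_boundary
    (fun t ht ↦ (hg t ht).continuousWithinAt)
    (fun t ht ↦ (hg t (Ico_subset_Icc_self ht)).mono_of_mem_nhdsWithin (Icc_mem_nhdsGE_of_mem ht))
    (by simp [g, γ]) hB hg' (right_mem_Icc.2 zero_le_one)
  simpa [g, γ] using norm_g_le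

end TaylorRemainder

section TaylorAverage

variable {E : Type*} [NormedAddCommGroup E] [NormedSpace ℝ E] {f f' : ℝ → E} {a b x M : ℝ}

theorem norm_sub_sub_smul_deriv_le_of_norm_deriv_sub_le {S : Set ℝ} {u : ℝ}
    (hS : StarConvex ℝ x S) (hf : ∀ y ∈ S, HasDerivWithinAt f (f' y) S y)
    (hf' : ∀ y ∈ S, ‖f' y - f' x‖ ≤ M * |y - x|) (hu : u ∈ S) :
    ‖f u - f x - (u - x) • f' x‖ ≤ M / 2 * (u - x) ^ 2 := by
  have norm_sub_eq (y : ℝ) : ‖ContinuousLinearMap.toSpanSingleton ℝ (f' y) -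
      ContinuousLinearMap.toSpanSingleton ℝ (f' x)‖ = ‖f' y - f' x‖ := by
    simpa only [dist_eq_norm, ContinuousLinearMap.toSpanSingletonLIE_apply] using
      (ContinuousLinearMap.toSpanSingletonLIE ℝ E).dist_map (f' y) (f' x)
  simpa only [ContinuousLinearMap.toSpanSingleton_apply, Real.norm_eq_abs, sq_abs] using
    norm_sub_sub_fderiv_le_of_norm_fderiv_sub_le hS (fun y hy ↦ (hf y hy).hasFDerivWithinAt)
      (fun y hy ↦ (norm_sub_eq y).trans_le (hf' y hy)) hu

theorem average_sq_sub (hab : a ≠ b) (x : ℝ) :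
    (b - a)⁻¹ * ∫ u in a..b, (u - x) ^ 2 = (b - a) ^ 2 / 12 + (x - (a + b) / 2) ^ 2 := by
  have hba : b - a ≠ 0 := sub_ne_zero.2 hab.symm
  rw [integral_comp_sub_right (· ^ 2) x, integral_pow]
  field_simp
  ring

theorem average_sub_sub_smul [CompleteSpace E] (hab : a ≠ b) (hf : IntervalIntegrable f volume a b)
    (c v : E) (x : ℝ) :
    (b - a)⁻¹ • ∫ u in a..b, (f u - c - (u - x) • v) =
      (b - a)⁻¹ • (∫ u in a..b, f u) - c + (x - (a + b) / 2) • v := by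
  have hba : b - a ≠ 0 := sub_ne_zero.2 hab.symm
  have integral_linear : ∫ u in a..b, (u - x) • v = ((b - a) * ((a + b) / 2 - x)) • v := by
    rw [intervalIntegral.integral_smul_const, integral_comp_sub_right (fun u ↦ u) x, integral_id]
    ring_nf
  rw [intervalIntegral.integral_sub (hf.sub intervalIntegrable_const)
      (Continuous.intervalIntegrable (by fun_prop) _ _),
    intervalIntegral.integral_sub hf intervalIntegrable_const, intervalIntegral.integral_const,
    integral_linear, smul_sub, smul_sub, mul_smul, inv_smul_smul₀ hba, inv_smul_smul₀ hba]
  module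

theorem norm_average_le_average_of_norm_le {g : ℝ → ℝ} (hab : a ≤ b)
    (hg : IntervalIntegrable g volume a b) (hfg : ∀ u ∈ Icc a b, ‖f u‖ ≤ g u) :
    ‖(b - a)⁻¹ • ∫ u in a..b, f u‖ ≤ (b - a)⁻¹ * ∫ u in a..b, g u := by
  have hba : 0 ≤ (b - a)⁻¹ := inv_nonneg.2 (sub_nonneg.2 hab)
  rw [norm_smul, Real.norm_of_nonneg hba]
  gcongr
  exact norm_integral_le_of_norm_le hab
    (.of_forall fun u hu ↦ hfg u (Ioc_subset_Icc_self hu)) hg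

theorem stmt5_general [CompleteSpace E] (hab : a < b) (hx : x ∈ Icc a b)
    (hf : ∀ y ∈ Icc a b, HasDerivWithinAt f (f' y) (Icc a b) y)
    (hf' : ∀ y ∈ Icc a b, ‖f' y - f' x‖ ≤ M * |y - x|) :
    ‖(1 / (b - a)) • (∫ u in a..b, f u) - f x + (x - (a + b) / 2) • f' x‖ ≤
      M * ((b - a) ^ 2 / 24 + (1 / 2) * (x - (a + b) / 2) ^ 2) := by
  have hfi : IntervalIntegrable f volume a b :=
    ContinuousOn.intervalIntegrable_of_Icc hab.le fun y hy ↦ (hf y hy).continuousWithinAt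
  calc
    _ = ‖(b - a)⁻¹ • ∫ u in a..b, (f u - f x - (u - x) • f' x)‖ := by
      rw [one_div, average_sub_sub_smul hab.ne hfi]
    _ ≤ (b - a)⁻¹ * ∫ u in a..b, M / 2 * (u - x) ^ 2 :=
      norm_average_le_average_of_norm_le hab.le (Continuous.intervalIntegrable (by fun_prop) _ _)
        fun u hu ↦ norm_sub_sub_smul_deriv_le_of_norm_deriv_sub_le
          ((convex_Icc a b).starConvex hx) hf hf' hu
    _ = M / 2 * ((b - a) ^ 2 / 12 + (x - (a + b) / 2) ^ 2) := by
      rw [intervalIntegral.integral_const_mul, mul_left_comm, average_sq_sub hab.ne]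
    _ = _ := by ring

end TaylorAverage

section Constant

variable {p q s : ℝ}

theorem one_add_mul_rpow_one_div_le {r : ℝ} (hp : 1 ≤ p) (hr : 0 ≤ 1 + p * r) :
    (1 + p * r) ^ (1 / p) ≤ 1 + r := by
  have hr' : -1 ≤ r := by nlinarith
  rw [one_div, Real.rpow_inv_le_iff_of_pos hr (by linarith) (by linarith)]
  exact one_add_mul_self_le_rpow_one_add hr' hp

theorem le_three_mul_div_rpow_mul_rpow {M : ℝ} (hM : 0 ≤ M) (hp : 1 ≤ p) (hq : 0 ≤ q)
    (hs : s ∈ Ioc (-1) 1) : M ≤ 3 * M / (2 * p + 1) ^ (1 / p) * (2 / (s + 1)) ^ (1 / q) := by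
  have rpow_le_three : (2 * p + 1) ^ (1 / p) ≤ 3 := calc
    (2 * p + 1) ^ (1 / p) = (1 + p * 2) ^ (1 / p) := by ring_nf
    _ ≤ 1 + 2 := one_add_mul_rpow_one_div_le hp (by linarith)
    _ = 3 := by norm_num
  have one_le_two_div : 1 ≤ 2 / (s + 1) := by
    rw [one_le_div (by linarith [hs.1])]
    linarith [hs.2]
  have le_three_mul_div : M ≤ 3 * M / (2 * p + 1) ^ (1 / p) := by
    rw [le_div_iff₀ (by positivity), mul_comm]
    gcongr
  exact le_three_mul_div.trans
    (le_mul_of_one_le_right (by positivity) (Real.one_le_rpow one_le_two_div (by positivity)))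

end Constant

theorem stmt5 (I : Set ℝ) (hI : Convex ℝ I) (hI0 : I ⊆ Set.Ici (0:ℝ)) (f f' f'' : ℝ → ℝ) (a b : ℝ)
    (ha : a ∈ interior I) (hb : b ∈ interior I) (hab : a < b)
    (hf' : ∀ y ∈ interior I, HasDerivAt f (f' y) y)
    (hf'' : ∀ y ∈ interior I, HasDerivAt f' (f'' y) y)
    (hfint : IntervalIntegrable f'' MeasureTheory.volume a b)
    (p q : ℝ) (hp : 1 < p) (hq : 1 < q) (hpq : 1 / p + 1 / q = 1)
    (s : ℝ) (hs : s ∈ Set.Ioc (0:ℝ) 1)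
    (hconv : ∀ u ∈ Set.Icc a b, ∀ v ∈ Set.Icc a b, ∀ t ∈ Set.Icc (0:ℝ) 1,
      |f'' (t * u + (1 - t) * v)| ^ q ≤ t ^ s * |f'' u| ^ q + (1 - t) ^ s * |f'' v| ^ q)
    (M : ℝ) (hM : 0 < M) (hbd : ∀ u ∈ Set.Icc a b, |f'' u| ≤ M) :
    ∀ x ∈ Set.Icc a b,
      |(1 / (b - a)) * (∫ u in a..b, f u) - f x + (x - (a + b) / 2) * f' x|
        ≤ 3 * M / (2 * p + 1) ^ (1 / p) * (2 / (s + 1)) ^ (1 / q) *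
            ((b - a) ^ 2 / 24 + (1 / 2) * (x - (a + b) / 2) ^ 2) := by
  intro x hx
  have hsub : Icc a b ⊆ interior I := hI.interior.ordConnected.out ha hb
  have hLip (y : ℝ) (hy : y ∈ Icc a b) : |f' y - f' x| ≤ M * |y - x| :=
    (convex_Icc a b).norm_image_sub_le_of_norm_hasDerivWithin_le
      (fun z hz ↦ (hf'' z (hsub hz)).hasDerivWithinAt) hbd hx hy
  exact (stmt5_general hab hx (fun y hy ↦ (hf' y (hsub hy)).hasDerivWithinAt) hLip).trans <|
    mul_le_mul_of_nonneg_right (le_three_mul_div_rpow_mul_rpow hM.le hp.le (by linarith)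
      ⟨by linarith [hs.1], hs.2⟩) (by positivity)
end

section
/- Let $f : I \subset [0,\infty) \to \mathbb{R}$ be twice differentiable on the interior $I^\circ$ of $I$ with $f''$ integrable on $[a,b]$, where $a, b \in I^\circ$ and $a < b$. Let $q \ge 1$, suppose $|f''|^q$ is $s$-convex in the second sense on $[a,b]$ for some fixed $s \in (0,1]$, and suppose $M > 0$ satisfies $|f''(u)| \le M$ for all $u \in [a,b]$. Then for every $x \in [a,b]$: $\left| \frac{1}{b-a}\int_a^b f(u)\,du - f(x) + \left(x - \frac{a+b}{2}\right) f'(x) \right| \le M \left( \frac{3(s^2 + 3s + 4)}{(s+1)(s+2)(s+3)} \right)^{1/q} \Big[ \frac{(b-a)^2}{24} + \frac{1}{2}\left(x - \frac{a+b}{2}\right)^2 \Big]$. -/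
open MeasureTheory Set intervalIntegral

/-! Expand `f` to first order at `x`: if `‖f' u - f' x‖ ≤ M * |u - x|`, then
`‖f u - f x - (u - x) • f' x‖ ≤ M / 2 * (u - x) ^ 2`. Averaging over `u ∈ [a, b]` turns the vector
on the left into the error term of the theorem, because `u - x` has mean `(a + b) / 2 - x`, and the
right-hand side into `M * ((b - a) ^ 2 / 24 + (x - (a + b) / 2) ^ 2 / 2)`. The remaining factor is
`(3 * ∫ t in 0..1, t ^ 2 * (t ^ s + (1 - t) ^ s)) ^ (1 / q)`, which is at least `1` since
`t ^ s + (1 - t) ^ s ≥ 1`. -/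

section Taylor

variable {E F : Type*} [NormedAddCommGroup E] [NormedSpace ℝ E]
  [NormedAddCommGroup F] [NormedSpace ℝ F] {M : ℝ}

theorem norm_sub_sub_fderiv_apply_le {f : E → F} {f' : E → E →L[ℝ] F} {s : Set E} {x u : E}
    (hs : StarConvex ℝ x s) (hf : ∀ y ∈ s, HasFDerivWithinAt f (f' y) s y)
    (hlip : ∀ y ∈ s, ‖f' y - f' x‖ ≤ M * ‖y - x‖) (hu : u ∈ s) :
    ‖f u - f x - f' x (u - x)‖ ≤ M / 2 * ‖u - x‖ ^ 2 := by
  set v := u - x with hv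
  have hmem : MapsTo (fun t : ℝ ↦ x + t • v) (Icc 0 1) s :=
    fun t ht ↦ hs.add_smul_sub_mem hu ht.1 ht.2
  have hline (t : ℝ) : HasDerivAt (fun t : ℝ ↦ x + t • v) v t :=
    (((hasDerivAt_id' t).smul_const v).const_add x).congr_deriv (one_smul ℝ v)
  let g : ℝ → F := fun t ↦ f (x + t • v) - f x - t • f' x v
  have hg : ∀ t ∈ Icc (0 : ℝ) 1,
      HasDerivWithinAt g (f' (x + t • v) v - f' x v) (Icc 0 1) t := fun t ht ↦ by
    have hcomp := (hf _ (hmem ht)).comp_hasDerivWithinAt t (hline t).hasDerivWithinAt hmem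
    have hlin := ((hasDerivAt_id' t).smul_const (f' x v)).hasDerivWithinAt (s := Icc 0 1)
    exact ((hcomp.sub_const (f x)).sub hlin).congr_deriv (by rw [one_smul])
  have hB (t : ℝ) : HasDerivAt (fun t ↦ M / 2 * ‖v‖ ^ 2 * t ^ 2) (M * ‖v‖ ^ 2 * t) t :=
    ((hasDerivAt_pow 2 t).const_mul _).congr_deriv (by push_cast; ring)
  have hbound : ∀ t ∈ Ico (0 : ℝ) 1, ‖f' (x + t • v) v - f' x v‖ ≤ M * ‖v‖ ^ 2 * t := fun t ht ↦
    calc ‖f' (x + t • v) v - f' x v‖ = ‖(f' (x + t • v) - f' x) v‖ := rfl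
      _ ≤ M * ‖x + t • v - x‖ * ‖v‖ :=
        ContinuousLinearMap.le_of_opNorm_le _ (hlip _ (hmem (Ico_subset_Icc_self ht))) v
      _ = M * ‖v‖ ^ 2 * t := by
        rw [add_sub_cancel_left, norm_smul, Real.norm_of_nonneg ht.1]
        ring
  have hfence := image_norm_le_of_norm_deriv_right_le_deriv_boundary
    (fun t ht ↦ (hg t ht).continuousWithinAt)
    (fun t ht ↦ (hg t (Ico_subset_Icc_self ht)).mono_of_mem_nhdsWithin (Icc_mem_nhdsGE_of_mem ht))
    (by simp [g]) hB hbound (right_mem_Icc.2 zero_le_one)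
  simpa [g, hv] using hfence

theorem norm_sub_sub_smul_deriv_le {f f' : ℝ → F} {s : Set ℝ} {x u : ℝ}
    (hs : StarConvex ℝ x s) (hf : ∀ y ∈ s, HasDerivWithinAt f (f' y) s y)
    (hlip : ∀ y ∈ s, ‖f' y - f' x‖ ≤ M * |y - x|) (hu : u ∈ s) :
    ‖f u - f x - (u - x) • f' x‖ ≤ M / 2 * (u - x) ^ 2 := by
  have hnorm (y : ℝ) : ‖ContinuousLinearMap.toSpanSingleton ℝ (f' y) - .toSpanSingleton ℝ (f' x)‖ =
      ‖f' y - f' x‖ := by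
    simpa only [dist_eq_norm, ContinuousLinearMap.toSpanSingletonLIE_apply] using
      (ContinuousLinearMap.toSpanSingletonLIE ℝ F).dist_map (f' y) (f' x)
  have h := norm_sub_sub_fderiv_apply_le hs (fun y hy ↦ (hf y hy).hasFDerivWithinAt)
    (fun y hy ↦ (hnorm y).trans_le (hlip y hy)) hu
  simpa only [ContinuousLinearMap.toSpanSingleton_apply, Real.norm_eq_abs, sq_abs] using h

end Taylor

section Average

variable {F : Type*} [NormedAddCommGroup F] [NormedSpace ℝ F] {a b x M : ℝ}

theorem integral_sub_const_sq (a b x : ℝ) :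
    ∫ u in a..b, (u - x) ^ 2 = (b - a) * ((b - a) ^ 2 / 12 + (x - (a + b) / 2) ^ 2) := by
  rw [integral_comp_sub_right (fun u ↦ u ^ 2), integral_pow]
  push_cast
  ring

theorem integral_sub_sub_smul [CompleteSpace F] {f : ℝ → F} (hf : IntervalIntegrable f volume a b)
    (x : ℝ) (y z : F) :
    ∫ u in a..b, (f u - y - (u - x) • z) =
      (∫ u in a..b, f u) - (b - a) • y + (b - a) • (x - (a + b) / 2) • z := by
  have hmean : ∫ u in a..b, (u - x) = -((b - a) * (x - (a + b) / 2)) := by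
    rw [integral_comp_sub_right (fun u ↦ u), integral_id]
    ring
  have hlin : IntervalIntegrable (fun u ↦ (u - x) • z) volume a b :=
    Continuous.intervalIntegrable (by fun_prop) a b
  rw [integral_sub (hf.sub intervalIntegrable_const) hlin, integral_sub hf intervalIntegrable_const,
    intervalIntegral.integral_const, intervalIntegral.integral_smul_const, hmean, neg_smul,
    mul_smul, sub_neg_eq_add]

theorem norm_average_sub_add_smul_le [CompleteSpace F] {f : ℝ → F} {z : F} (hab : a < b)
    (hf : IntervalIntegrable f volume a b)
    (hbound : ∀ u ∈ Icc a b, ‖f u - f x - (u - x) • z‖ ≤ M / 2 * (u - x) ^ 2) :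
    ‖(1 / (b - a)) • (∫ u in a..b, f u) - f x + (x - (a + b) / 2) • z‖ ≤
      M * ((b - a) ^ 2 / 24 + 1 / 2 * (x - (a + b) / 2) ^ 2) := by
  have hba : 0 < b - a := sub_pos.2 hab
  have hint : ‖∫ u in a..b, (f u - f x - (u - x) • z)‖ ≤ ∫ u in a..b, M / 2 * (u - x) ^ 2 :=
    norm_integral_le_of_norm_le hab.le
      (Filter.Eventually.of_forall fun u hu ↦ hbound u (Ioc_subset_Icc_self hu))
      (Continuous.intervalIntegrable (by fun_prop) a b)
  calc ‖(1 / (b - a)) • (∫ u in a..b, f u) - f x + (x - (a + b) / 2) • z‖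
      = ‖(b - a)⁻¹ • ∫ u in a..b, (f u - f x - (u - x) • z)‖ := by
        rw [integral_sub_sub_smul hf, smul_add, smul_sub, inv_smul_smul₀ hba.ne',
          inv_smul_smul₀ hba.ne', one_div]
    _ ≤ (b - a)⁻¹ * ∫ u in a..b, M / 2 * (u - x) ^ 2 := by
        rw [norm_smul, Real.norm_of_nonneg (inv_nonneg.2 hba.le)]
        gcongr
    _ = M * ((b - a) ^ 2 / 24 + 1 / 2 * (x - (a + b) / 2) ^ 2) := by
        rw [intervalIntegral.integral_const_mul, integral_sub_const_sq]
        field_simp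
        ring

theorem stmt9_general [CompleteSpace F] {f f' : ℝ → F} (hab : a < b)
    (hf : ∀ y ∈ Icc a b, HasDerivWithinAt f (f' y) (Icc a b) y) (hx : x ∈ Icc a b)
    (hlip : ∀ u ∈ Icc a b, ‖f' u - f' x‖ ≤ M * |u - x|) :
    ‖(1 / (b - a)) • (∫ u in a..b, f u) - f x + (x - (a + b) / 2) • f' x‖ ≤
      M * ((b - a) ^ 2 / 24 + 1 / 2 * (x - (a + b) / 2) ^ 2) := by
  have hcont : ContinuousOn f (Icc a b) := fun y hy ↦ (hf y hy).continuousWithinAt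
  exact norm_average_sub_add_smul_le hab (hcont.intervalIntegrable_of_Icc hab.le)
    fun u hu ↦ norm_sub_sub_smul_deriv_le ((convex_Icc a b).starConvex hx) hf hlip hu

end Average

theorem one_le_three_mul_sq_add_div {s : ℝ} (hs₀ : -1 < s) (hs₁ : s ≤ 1) :
    1 ≤ 3 * (s ^ 2 + 3 * s + 4) / ((s + 1) * (s + 2) * (s + 3)) := by
  have hden : 0 < (s + 1) * (s + 2) * (s + 3) :=
    mul_pos (mul_pos (by linarith) (by linarith)) (by linarith)
  have hnonneg : 0 ≤ (1 - s) * ((s + 2) ^ 2 + 2) :=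
    mul_nonneg (sub_nonneg.2 hs₁) (by positivity)
  have hfactor : 3 * (s ^ 2 + 3 * s + 4) - (s + 1) * (s + 2) * (s + 3) =
      (1 - s) * ((s + 2) ^ 2 + 2) := by ring
  exact (one_le_div hden).2 (sub_nonneg.1 (hfactor ▸ hnonneg))

theorem stmt9 (I : Set ℝ) (hI : Convex ℝ I) (hI0 : I ⊆ Set.Ici (0:ℝ)) (f f' f'' : ℝ → ℝ) (a b : ℝ)
    (ha : a ∈ interior I) (hb : b ∈ interior I) (hab : a < b)
    (hf' : ∀ y ∈ interior I, HasDerivAt f (f' y) y)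
    (hf'' : ∀ y ∈ interior I, HasDerivAt f' (f'' y) y)
    (hfint : IntervalIntegrable f'' MeasureTheory.volume a b)
    (q : ℝ) (hq : 1 ≤ q)
    (s : ℝ) (hs : s ∈ Set.Ioc (0:ℝ) 1)
    (hconv : ∀ u ∈ Set.Icc a b, ∀ v ∈ Set.Icc a b, ∀ t ∈ Set.Icc (0:ℝ) 1,
      |f'' (t * u + (1 - t) * v)| ^ q ≤ t ^ s * |f'' u| ^ q + (1 - t) ^ s * |f'' v| ^ q)
    (M : ℝ) (hM : 0 < M) (hbd : ∀ u ∈ Set.Icc a b, |f'' u| ≤ M) :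
    ∀ x ∈ Set.Icc a b,
      |(1 / (b - a)) * (∫ u in a..b, f u) - f x + (x - (a + b) / 2) * f' x|
        ≤ M * (3 * (s ^ 2 + 3 * s + 4) / ((s + 1) * (s + 2) * (s + 3))) ^ (1 / q) *
            ((b - a) ^ 2 / 24 + (1 / 2) * (x - (a + b) / 2) ^ 2) := by
  intro x hx
  have hsub : Icc a b ⊆ interior I := hI.interior.ordConnected.out ha hb
  have hlip : ∀ u ∈ Icc a b, ‖f' u - f' x‖ ≤ M * |u - x| := fun u hu ↦
    (convex_Icc a b).norm_image_sub_le_of_norm_hasDerivWithin_le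
      (fun y hy ↦ (hf'' y (hsub hy)).hasDerivWithinAt) hbd hx hu
  have hconst : 1 ≤ (3 * (s ^ 2 + 3 * s + 4) / ((s + 1) * (s + 2) * (s + 3))) ^ (1 / q) :=
    Real.one_le_rpow (one_le_three_mul_sq_add_div (by linarith [hs.1]) hs.2) (by positivity)
  exact (stmt9_general hab (fun y hy ↦ (hf' y (hsub hy)).hasDerivWithinAt) hx hlip).trans
    (mul_le_mul_of_nonneg_right (le_mul_of_one_le_right hM.le hconst) (by positivity))
end

section
/- Let $f : I \subset [0,\infty) \to \mathbb{R}$ be twice differentiable on the interior $I^\circ$ of $I$ with $f''$ integrable on $[a,b]$, where $a, b \in I^\circ$ and $a < b$. Let $q \ge 1$, suppose $|f''|^q$ is $s$-convex in the second sense on $[a,b]$ for some fixed $s \in (0,1]$, and suppose $M > 0$ satisfies $|f''(u)| \le M$ for all $u \in [a,b]$. Then the perturbed trapezoid inequality holds: $\left| \int_a^b f(u)\,du - \frac{b-a}{2}\big[f(a) + f(b)\big] + \frac{(b-a)^2}{4}\big(f'(b) - f'(a)\big) \right| \le \frac{(b-a)^3}{6} \left( \frac{3(s^2 + 3s + 4)}{(s+1)(s+2)(s+3)}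 \right)^{1/q} M$. -/
open MeasureTheory Set intervalIntegral

/-!
Integrating `∫ K f''` by parts twice against the quadratic kernel
`K u = ((u - a) ^ 2 + (b - u) ^ 2) / 4` produces exactly the perturbed trapezoid error: `K` takes
the value `(b - a) ^ 2 / 4` at both endpoints, and its derivative `u - (a + b) / 2` the values
`±(b - a) / 2`. As `K` is nonnegative of total mass `(b - a) ^ 3 / 6`, the error is at most
`(b - a) ^ 3 / 6 * M`. The factor depending on `s` and `q` is at least `1`, because
`3 * (s ^ 2 + 3 * s + 4) - (s + 1) * (s + 2) * (s + 3) = (1 - s) * (s ^ 2 + 4 * s + 6)`.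
-/

/-- The Peano kernel of the trapezoid rule on `[a, b]` corrected by the endpoint derivatives: the
weight against which `f''` is integrated in the error formula. -/
noncomputable def perturbedTrapezoidKernel (a b u : ℝ) : ℝ :=
  ((u - a) ^ 2 + (b - u) ^ 2) / 4

namespace perturbedTrapezoidKernel

variable (a b u : ℝ)

lemma nonneg : 0 ≤ perturbedTrapezoidKernel a b u := by
  unfold perturbedTrapezoidKernel
  positivity

@[simp]
lemma apply_left : perturbedTrapezoidKernel a b a = (b - a) ^ 2 / 4 := by
  simp [perturbedTrapezoidKernel]

@[simp]
lemma apply_right : perturbedTrapezoidKernel a b b = (b - a) ^ 2 / 4 := by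
  simp [perturbedTrapezoidKernel]

lemma hasDerivAt : HasDerivAt (perturbedTrapezoidKernel a b) (u - (a + b) / 2) u := by
  have h := ((((hasDerivAt_id u).sub_const a).pow 2).add
    (((hasDerivAt_id u).const_sub b).pow 2)).div_const 4
  exact h.congr_deriv (by simp only [id]; ring)

lemma continuous : Continuous (perturbedTrapezoidKernel a b) :=
  continuous_iff_continuousAt.2 fun u => (hasDerivAt a b u).continuousAt

lemma integral_eq : ∫ u in a..b, perturbedTrapezoidKernel a b u = (b - a) ^ 3 / 6 := by
  have h_left : ∫ u in a..b, (u - a) ^ 2 = (b - a) ^ 3 / 3 := by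
    rw [integral_comp_sub_right (fun u => u ^ 2), integral_pow]
    norm_num
  have h_right : ∫ u in a..b, (b - u) ^ 2 = (b - a) ^ 3 / 3 := by
    rw [integral_comp_sub_left (fun u => u ^ 2), integral_pow]
    norm_num
  simp only [perturbedTrapezoidKernel]
  rw [intervalIntegral.integral_div, intervalIntegral.integral_add
    (Continuous.intervalIntegrable (by fun_prop) _ _)
    (Continuous.intervalIntegrable (by fun_prop) _ _), h_left, h_right]
  ring

end perturbedTrapezoidKernel

section VectorValued

variable {E : Type*} [NormedAddCommGroup E] [NormedSpace ℝ E]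
  {f f' f'' : ℝ → E} {a b : ℝ}

lemma integral_sub_midpoint_smul_deriv [CompleteSpace E]
    (hf : ∀ x ∈ uIcc a b, HasDerivWithinAt f (f' x) (uIcc a b) x)
    (hf' : IntervalIntegrable f' volume a b) :
    ∫ u in a..b, (u - (a + b) / 2) • f' u =
      ((b - a) / 2) • (f a + f b) - ∫ u in a..b, f u := by
  rw [integral_smul_deriv_eq_deriv_smul_of_hasDerivWithinAt (u := fun u => u - (a + b) / 2)
    (u' := fun _ => 1) (fun x _ => ((hasDerivAt_id x).sub_const _).hasDerivWithinAt) hf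
    intervalIntegrable_const hf']
  simp only [one_smul]
  module

lemma integral_perturbedTrapezoidKernel_smul_deriv2 [CompleteSpace E]
    (hf : ∀ x ∈ uIcc a b, HasDerivWithinAt f (f' x) (uIcc a b) x)
    (hf' : ∀ x ∈ uIcc a b, HasDerivWithinAt f' (f'' x) (uIcc a b) x)
    (hf'' : IntervalIntegrable f'' volume a b) :
    ∫ u in a..b, perturbedTrapezoidKernel a b u • f'' u =
      (∫ u in a..b, f u) - ((b - a) / 2) • (f a + f b) +
        ((b - a) ^ 2 / 4) • (f' b - f' a) := by
  have hf'_cont : ContinuousOn f' (uIcc a b) := fun x hx => (hf' x hx).continuousWithinAt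
  rw [integral_smul_deriv_eq_deriv_smul_of_hasDerivWithinAt
      (fun x _ => (perturbedTrapezoidKernel.hasDerivAt a b x).hasDerivWithinAt) hf'
      (Continuous.intervalIntegrable (by fun_prop) _ _) hf'',
    integral_sub_midpoint_smul_deriv hf hf'_cont.intervalIntegrable,
    perturbedTrapezoidKernel.apply_left, perturbedTrapezoidKernel.apply_right]
  module

lemma norm_integral_perturbedTrapezoidKernel_smul_le {g : ℝ → E} {M : ℝ} (hab : a ≤ b)
    (hg : ∀ u ∈ Icc a b, ‖g u‖ ≤ M) :
    ‖∫ u in a..b, perturbedTrapezoidKernel a b u • g u‖ ≤ (b - a) ^ 3 / 6 * M := by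
  have h_pointwise : ∀ u ∈ Ioc a b,
      ‖perturbedTrapezoidKernel a b u • g u‖ ≤ perturbedTrapezoidKernel a b u * M := by
    intro u hu
    have hK := perturbedTrapezoidKernel.nonneg a b u
    rw [norm_smul, Real.norm_of_nonneg hK]
    exact mul_le_mul_of_nonneg_left (hg u (Ioc_subset_Icc_self hu)) hK
  calc ‖∫ u in a..b, perturbedTrapezoidKernel a b u • g u‖
      ≤ ∫ u in a..b, perturbedTrapezoidKernel a b u * M :=
        norm_integral_le_of_norm_le hab (ae_of_all _ h_pointwise)
          (((perturbedTrapezoidKernel.continuous a b).mul_const M).intervalIntegrable _ _)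
    _ = (b - a) ^ 3 / 6 * M := by
        rw [intervalIntegral.integral_mul_const, perturbedTrapezoidKernel.integral_eq]

theorem stmt11_general [CompleteSpace E] {M : ℝ} (hab : a ≤ b)
    (hf : ∀ x ∈ Icc a b, HasDerivWithinAt f (f' x) (Icc a b) x)
    (hf' : ∀ x ∈ Icc a b, HasDerivWithinAt f' (f'' x) (Icc a b) x)
    (hf'' : IntervalIntegrable f'' volume a b) (hM : ∀ u ∈ Icc a b, ‖f'' u‖ ≤ M) :
    ‖(∫ u in a..b, f u) - ((b - a) / 2) • (f a + f b) + ((b - a) ^ 2 / 4) • (f' b - f' a)‖ ≤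
      (b - a) ^ 3 / 6 * M := by
  rw [← uIcc_of_le hab] at hf hf'
  rw [← integral_perturbedTrapezoidKernel_smul_deriv2 hf hf' hf'']
  exact norm_integral_perturbedTrapezoidKernel_smul_le hab hM

end VectorValued

lemma one_le_sConvex_factor_rpow {s p : ℝ} (hs0 : 0 ≤ s) (hs1 : s ≤ 1) (hp : 0 ≤ p) :
    1 ≤ (3 * (s ^ 2 + 3 * s + 4) / ((s + 1) * (s + 2) * (s + 3))) ^ p := by
  refine Real.one_le_rpow ((one_le_div (by positivity)).2 ?_) hp
  have h_gap : 0 ≤ (1 - s) * (s ^ 2 + 4 * s + 6) :=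
    mul_nonneg (sub_nonneg.2 hs1) (by positivity)
  linarith

theorem stmt11 (I : Set ℝ) (hI : Convex ℝ I) (hI0 : I ⊆ Set.Ici (0:ℝ)) (f f' f'' : ℝ → ℝ) (a b : ℝ)
    (ha : a ∈ interior I) (hb : b ∈ interior I) (hab : a < b)
    (hf' : ∀ y ∈ interior I, HasDerivAt f (f' y) y)
    (hf'' : ∀ y ∈ interior I, HasDerivAt f' (f'' y) y)
    (hfint : IntervalIntegrable f'' MeasureTheory.volume a b)
    (q : ℝ) (hq : 1 ≤ q)
    (s : ℝ) (hs : s ∈ Set.Ioc (0:ℝ) 1)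
    (hconv : ∀ u ∈ Set.Icc a b, ∀ v ∈ Set.Icc a b, ∀ t ∈ Set.Icc (0:ℝ) 1,
      |f'' (t * u + (1 - t) * v)| ^ q ≤ t ^ s * |f'' u| ^ q + (1 - t) ^ s * |f'' v| ^ q)
    (M : ℝ) (hM : 0 < M) (hbd : ∀ u ∈ Set.Icc a b, |f'' u| ≤ M) :
    |(∫ u in a..b, f u) - (b - a) / 2 * (f a + f b) + (b - a) ^ 2 / 4 * (f' b - f' a)|
      ≤ (b - a) ^ 3 / 6 * (3 * (s ^ 2 + 3 * s + 4) / ((s + 1) * (s + 2) * (s + 3))) ^ (1 / q) * M := by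
  have h_sub : Icc a b ⊆ interior I := hI.interior.ordConnected.out ha hb
  have h_general := stmt11_general hab.le (fun x hx => (hf' x (h_sub hx)).hasDerivWithinAt)
    (fun x hx => (hf'' x (h_sub hx)).hasDerivWithinAt) hfint hbd
  have h_cube : 0 ≤ (b - a) ^ 3 / 6 := by
    have := sub_pos.2 hab
    positivity
  exact h_general.trans <| mul_le_mul_of_nonneg_right
    (le_mul_of_one_le_right h_cube <|
      one_le_sConvex_factor_rpow hs.1.le hs.2 (by positivity)) hM.le
end
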